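/- Let k ∈ (0,1) and q = e^{−πK'/K}. For every n ∈ ℕ, Kuznetsov's moment integral I_n^− has the Lambert series representation I_n^− = −(π/K)^{2n+4} (E_{2n+3}(0) + 4 Σ_{m≥1} m^{2n+3} q^m/(1 − (−q)^m)). -/

import Mathlib

/-!
The hyperbolic kernel `1 / (cosh (b t) - cos (a t))` factors as `1 / (2 sinh (u t) sinh (v t))` with
`u, v = (b ∓ a i) / 2`. Expanding both factors as geometric series and integrating termwise turns a
moment integral into `4 (2 n + 3)!` times the sum of `w ^ (-(2 n + 4))` over the odd combinations
`w` of `u, v` with positive coefficients. Exchanging `a` and `b` turns `u, v` into `-i v, i u`;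
hence the other moment integral is the sum over an adjacent quadrant, and together the two make
up half of an Eisenstein sum over all odd combinations. Summing it by rows, the central row gives
the Bernoulli number and the Lipschitz formula on the other rows gives the Lambert series.
-/

open MeasureTheory Real

/-- The complete elliptic integral of the first kind `K(k)`. -/
noncomputable def ellipticK (k : ℝ) : ℝ :=
  ∫ θ in (0 : ℝ)..(π / 2), (1 - k ^ 2 * Real.sin θ ^ 2) ^ (-(1 / 2) : ℝ)

/-- Kuznetsov's moment integral `I_n^+`, realizing
`(1/2)∫_ℝ x^n dx/(cos(√x K) + cosh(√x K'))` with `√x = i√(−x)` for `x < 0`. -/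
noncomputable def Iplus (k : ℝ) (n : ℕ) : ℝ :=
  (1 / 2) * (∫ x in Set.Ioi (0 : ℝ), x ^ n /
      (Real.cos (ellipticK k * Real.sqrt x) +
        Real.cosh (ellipticK (Real.sqrt (1 - k ^ 2)) * Real.sqrt x)))
  + ((-1 : ℝ) ^ n / 2) * (∫ x in Set.Ioi (0 : ℝ), x ^ n /
      (Real.cosh (ellipticK k * Real.sqrt x) +
        Real.cos (ellipticK (Real.sqrt (1 - k ^ 2)) * Real.sqrt x)))

/-- Kuznetsov's moment integral `I_n^−`, realizing
`∫_ℝ x^{n+1} dx/(cos(√x K) − cosh(√x K'))` with `√x = i√(−x)` for `x < 0`. -/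
noncomputable def Iminus (k : ℝ) (n : ℕ) : ℝ :=
  (∫ x in Set.Ioi (0 : ℝ), x ^ (n + 1) /
      (Real.cos (ellipticK k * Real.sqrt x) -
        Real.cosh (ellipticK (Real.sqrt (1 - k ^ 2)) * Real.sqrt x)))
  + (-1 : ℝ) ^ (n + 1) * (∫ x in Set.Ioi (0 : ℝ), x ^ (n + 1) /
      (Real.cosh (ellipticK k * Real.sqrt x) -
        Real.cos (ellipticK (Real.sqrt (1 - k ^ 2)) * Real.sqrt x)))

section

open Set Filter Topology
open Complex (I)
open scoped Nat UpperHalfPlane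

/-! ### Gamma integrals -/

lemma integral_pow_mul_rexp_neg_mul_Ioi (p : ℕ) {r : ℝ} (hr : 0 < r) :
    ∫ t in Ioi 0, t ^ p * Real.exp (-(r * t)) = p ! / r ^ (p + 1) := by
  have h := Real.integral_rpow_mul_exp_neg_mul_Ioi (a := (p : ℝ) + 1) (by positivity) hr
  rw [Real.Gamma_nat_eq_factorial] at h
  have hcast : (p : ℝ) + 1 = (p + 1 : ℕ) := by push_cast; rfl
  simp only [add_sub_cancel_right, Real.rpow_natCast] at h
  rw [h, hcast, Real.rpow_natCast, one_div, inv_pow, inv_mul_eq_div]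

lemma norm_ofReal_pow_mul_cexp_neg_mul (p : ℕ) (r : ℂ) {t : ℝ} (ht : 0 ≤ t) :
    ‖(t : ℂ) ^ p * Complex.exp (-(r * t))‖ = t ^ p * Real.exp (-(r.re * t)) := by
  rw [norm_mul, Complex.norm_exp, norm_pow, Complex.norm_of_nonneg ht, Complex.neg_re,
    Complex.re_mul_ofReal]

lemma integrableOn_pow_mul_cexp_neg_mul_Ioi (p : ℕ) {r : ℂ} (hr : 0 < r.re) :
    IntegrableOn (fun t : ℝ ↦ (t : ℂ) ^ p * Complex.exp (-(r * t))) (Ioi 0) := by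
  have hreal : IntegrableOn (fun t : ℝ ↦ t ^ p * Real.exp (-(r.re * t))) (Ioi 0) := by
    refine Integrable.of_integral_ne_zero ?_
    rw [integral_pow_mul_rexp_neg_mul_Ioi p hr]
    positivity
  refine hreal.mono' (by fun_prop) ?_
  filter_upwards [self_mem_ae_restrict measurableSet_Ioi] with t ht
  exact (norm_ofReal_pow_mul_cexp_neg_mul p r (le_of_lt ht)).le

lemma tendsto_pow_mul_cexp_neg_mul_atTop (p : ℕ) {r : ℂ} (hr : 0 < r.re) :
    Tendsto (fun t : ℝ ↦ (t : ℂ) ^ p * Complex.exp (-(r * t))) atTop (𝓝 0) := by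
  rw [tendsto_zero_iff_norm_tendsto_zero]
  refine (tendsto_rpow_mul_exp_neg_mul_atTop_nhds_zero p r.re hr).congr' ?_
  filter_upwards [eventually_ge_atTop 0] with t ht
  rw [norm_ofReal_pow_mul_cexp_neg_mul p r ht, Real.rpow_natCast, neg_mul]

/-- The Gamma integral at a complex rate, where Mathlib only has real rates. -/
lemma integral_pow_mul_cexp_neg_mul_Ioi (p : ℕ) {r : ℂ} (hr : 0 < r.re) :
    ∫ t : ℝ in Ioi 0, (t : ℂ) ^ p * Complex.exp (-(r * t)) = p ! / r ^ (p + 1) := by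
  have hr0 : r ≠ 0 := by rintro rfl; simp at hr
  induction p with
  | zero => simpa using integral_exp_mul_complex_Ioi (a := -r) (by simpa) 0
  | succ p ih =>
    have hpow (t : ℝ) : HasDerivAt (fun t : ℝ ↦ (t : ℂ) ^ (p + 1)) ((p + 1) * (t : ℂ) ^ p) t := by
      simpa using (hasDerivAt_pow (p + 1) (t : ℂ)).comp_ofReal
    have hexp (t : ℝ) : HasDerivAt (fun t : ℝ ↦ -Complex.exp (-(r * t)) / r)
        (Complex.exp (-(r * t))) t := by
      have h := ((hasDerivAt_id (t : ℂ)).const_mul r).neg.cexp.neg.div_const r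
      refine h.comp_ofReal.congr_deriv ?_
      simp [hr0]
    have hboundary (t : ℝ) : (t : ℂ) ^ (p + 1) * (-Complex.exp (-(r * t)) / r) =
        (t : ℂ) ^ (p + 1) * Complex.exp (-(r * t)) * (-1 / r) := by ring
    have hrest (t : ℝ) : (p + 1) * (t : ℂ) ^ p * (-Complex.exp (-(r * t)) / r) =
        (t : ℂ) ^ p * Complex.exp (-(r * t)) * (-(p + 1) / r) := by ring
    rw [integral_Ioi_mul_deriv_eq_deriv_mul (a' := 0) (b' := 0) (fun t _ ↦ hpow t)
      (fun t _ ↦ hexp t) (integrableOn_pow_mul_cexp_neg_mul_Ioi (p + 1) hr) ?_ ?_ ?_]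
    · simp_rw [hrest, integral_mul_const, ih, Nat.factorial_succ]
      push_cast
      field_simp
      ring
    · simp only [Pi.mul_def, hrest]
      exact (integrableOn_pow_mul_cexp_neg_mul_Ioi p hr).mul_const _
    · refine tendsto_nhdsWithin_of_tendsto_nhds ?_
      have hcont : Continuous fun t : ℝ ↦ (t : ℂ) ^ (p + 1) * (-Complex.exp (-(r * t)) / r) := by
        fun_prop
      simpa [Pi.mul_def] using hcont.tendsto 0
    · simp only [Pi.mul_def, hboundary]
      simpa using (tendsto_pow_mul_cexp_neg_mul_atTop (p + 1) hr).mul_const (-1 / r)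

/-! ### Lattice sums over odd combinations of two periods -/

/-- The sum of `((2 j + 1) u + (2 l + 1) v)⁻ᵏ` over the positive quadrant `j, l ≥ 0`, which is the
Barnes double zeta function with periods `2 u`, `2 v` and shift `u + v` at `k`. -/
noncomputable def oddConeSum (k : ℕ) (u v : ℂ) : ℂ :=
  ∑' p : ℕ × ℕ, 1 / ((2 * p.1 + 1) * u + (2 * p.2 + 1) * v) ^ k

/-- The sum of `((2 s + 1) u + (2 r + 1) v)⁻ᵏ` over all integers `s, r`: the Eisenstein sum of the
lattice with periods `2 u`, `2 v`, translated by `u + v`. -/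
noncomputable def oddLatticeSum (k : ℕ) (u v : ℂ) : ℂ :=
  ∑' p : ℤ × ℤ, 1 / ((2 * p.1 + 1) * u + (2 * p.2 + 1) * v) ^ k

lemma oddConeSum_comm (k : ℕ) (u v : ℂ) : oddConeSum k u v = oddConeSum k v u := by
  rw [oddConeSum, ← (Equiv.prodComm ℕ ℕ).tsum_eq]
  simp only [oddConeSum, Equiv.prodComm_apply, Prod.fst_swap, Prod.snd_swap, add_comm]

lemma oddConeSum_mul_mul (k : ℕ) (c u v : ℂ) :
    oddConeSum k (c * u) (c * v) = oddConeSum k u v / c ^ k := by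
  simp_rw [oddConeSum, ← tsum_div_const, div_div, ← mul_pow]
  exact tsum_congr fun p ↦ by ring

lemma oddLatticeSum_mul_mul (k : ℕ) (c u v : ℂ) :
    oddLatticeSum k (c * u) (c * v) = oddLatticeSum k u v / c ^ k := by
  simp_rw [oddLatticeSum, ← tsum_div_const, div_div, ← mul_pow]
  exact tsum_congr fun p ↦ by ring

lemma linearIndependent_pair_of_re_mul_im_ne {u v : ℂ} (h : u.re * v.im ≠ u.im * v.re) :
    LinearIndependent ℝ ![u, v] := by
  rw [LinearIndependent.pair_iff]
  intro s t hst
  have hre : s * u.re + t * v.re = 0 := by simpa using congrArg Complex.re hst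
  have him : s * u.im + t * v.im = 0 := by simpa using congrArg Complex.im hst
  have hs : s * (u.re * v.im - u.im * v.re) = 0 := by linear_combination v.im * hre - v.re * him
  have ht : t * (u.re * v.im - u.im * v.re) = 0 := by linear_combination u.re * him - u.im * hre
  exact ⟨(mul_eq_zero_iff_right (sub_ne_zero.mpr h)).mp hs,
    (mul_eq_zero_iff_right (sub_ne_zero.mpr h)).mp ht⟩

lemma summable_one_div_odd_lattice_pow {k : ℕ} (hk : 3 ≤ k) {u v : ℂ}
    (huv : LinearIndependent ℝ ![u, v]) :
    Summable fun p : ℤ × ℤ ↦ 1 / ((2 * p.1 + 1) * u + (2 * p.2 + 1) * v) ^ k := by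
  have h2 : LinearIndependent ℝ ![2 * u, 2 * v] := by
    simp_rw [LinearIndependent.pair_iff, Complex.real_smul] at huv ⊢
    exact fun s t h ↦ huv s t (by linear_combination h / 2)
  let L : PeriodPair := ⟨2 * u, 2 * v, h2⟩
  have h := ZLattice.summable_norm_sub_inv_pow (L := L.lattice) k
    (by rw [L.finrank_lattice]; exact hk) (-(u + v))
  refine .of_norm ((L.latticeEquivProd.symm.toEquiv.summable_iff.mpr h).congr fun p ↦ ?_)
  have hp : ((L.latticeEquivProd.symm p : L.lattice) : ℂ) - -(u + v) =
      (2 * p.1 + 1) * u + (2 * p.2 + 1) * v := by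
    rw [L.latticeEquiv_symm_apply]
    ring
  simp [← hp]

lemma summable_one_div_odd_cone_pow_of_pos {k : ℕ} (hk : 3 ≤ k) {x y : ℝ} (hx : 0 < x)
    (hy : 0 < y) :
    Summable fun p : ℕ × ℕ ↦ 1 / ((2 * p.1 + 1) * x + (2 * p.2 + 1) * y) ^ k := by
  have hxy : LinearIndependent ℝ ![(x : ℂ), y * I] :=
    linearIndependent_pair_of_re_mul_im_ne (by simp [hx.ne', hy.ne'])
  have hcast : Function.Injective (Nat.cast : ℕ → ℤ) := Nat.cast_injective
  refine .of_nonneg_of_le (fun p ↦ by positivity) (fun p ↦ ?_)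
    ((summable_one_div_odd_lattice_pow hk hxy).norm.comp_injective (hcast.prodMap hcast))
  set z : ℂ := (2 * p.1 + 1) * x + (2 * p.2 + 1) * (y * I) with hz
  have hre : z.re = (2 * p.1 + 1) * x := by simp [hz]
  have him : z.im = (2 * p.2 + 1) * y := by simp [hz]
  have hz0 : z ≠ 0 := fun h ↦ by
    have : 0 < z.re := by rw [hre]; positivity
    simp [h] at this
  have hle : ‖z‖ ≤ (2 * p.1 + 1) * x + (2 * p.2 + 1) * y := by
    refine (Complex.norm_le_abs_re_add_abs_im z).trans_eq ?_
    rw [hre, him, abs_of_pos (by positivity), abs_of_pos (by positivity)]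
  simp only [Function.comp_apply, Prod.map, Int.cast_natCast, norm_div, norm_one, norm_pow, ← hz]
  gcongr

/-! ### Moments of the hyperbolic kernel -/

lemma hasSum_exp_neg_odd_mul {z : ℂ} (hz : 0 < z.re) :
    HasSum (fun j : ℕ ↦ Complex.exp (-((2 * j + 1) * z))) (1 / (2 * Complex.sinh z)) := by
  have hlt : ‖Complex.exp (-(2 * z))‖ < 1 := by
    rw [Complex.norm_exp, Real.exp_lt_one_iff]
    simpa using hz
  have hsinh : 1 / (2 * Complex.sinh z) =
      Complex.exp (-z) * (1 - Complex.exp (-(2 * z)))⁻¹ := by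
    rw [Complex.sinh, show -(2 * z) = -z + -z by ring, Complex.exp_add, Complex.exp_neg]
    have := Complex.exp_ne_zero z
    field_simp
  rw [hsinh]
  refine ((hasSum_geometric_of_norm_lt_one hlt).mul_left _).congr_fun fun j ↦ ?_
  rw [← Complex.exp_nat_mul, ← Complex.exp_add]
  ring_nf

lemma hasSum_exp_neg_odd_mul_add {u v : ℂ} (hu : 0 < u.re) (hv : 0 < v.re) :
    HasSum (fun p : ℕ × ℕ ↦ Complex.exp (-((2 * p.1 + 1) * u + (2 * p.2 + 1) * v)))
      (1 / (4 * (Complex.sinh u * Complex.sinh v))) := by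
  have hsu := hasSum_exp_neg_odd_mul hu
  have hsv := hasSum_exp_neg_odd_mul hv
  have hs := summable_mul_of_summable_norm hsu.summable.norm hsv.summable.norm
  have h := hsu.mul hsv hs
  simp_rw [← Complex.exp_add, ← neg_add] at h
  convert! h using 1
  ring

theorem integral_pow_div_sinh_mul_sinh {p : ℕ} (hp : 2 ≤ p) {u v : ℂ} (hu : 0 < u.re)
    (hv : 0 < v.re) :
    ∫ t : ℝ in Ioi 0, (t : ℂ) ^ p / (4 * (Complex.sinh (u * t) * Complex.sinh (v * t))) =
      p ! * oddConeSum (p + 1) u v := by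
  let r (i : ℕ × ℕ) : ℂ := (2 * i.1 + 1) * u + (2 * i.2 + 1) * v
  have hre (i : ℕ × ℕ) : (r i).re = (2 * i.1 + 1) * u.re + (2 * i.2 + 1) * v.re := by simp [r]
  have hpos (i : ℕ × ℕ) : 0 < (r i).re := by rw [hre]; positivity
  have hnorm (i : ℕ × ℕ) : ∫ t : ℝ in Ioi 0, ‖(t : ℂ) ^ p * Complex.exp (-(r i * t))‖ =
      p ! * (1 / ((2 * i.1 + 1) * u.re + (2 * i.2 + 1) * v.re) ^ (p + 1)) := by
    rw [setIntegral_congr_fun measurableSet_Ioi fun t ht ↦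
      norm_ofReal_pow_mul_cexp_neg_mul p (r i) (le_of_lt ht),
      integral_pow_mul_rexp_neg_mul_Ioi p (hpos i), hre, mul_one_div]
  have hkernel {t : ℝ} (ht : t ∈ Ioi 0) : ∑' i, (t : ℂ) ^ p * Complex.exp (-(r i * t)) =
      (t : ℂ) ^ p / (4 * (Complex.sinh (u * t) * Complex.sinh (v * t))) := by
    have hs := hasSum_exp_neg_odd_mul_add (u := u * t) (v := v * t)
      (by simpa using mul_pos hu ht) (by simpa using mul_pos hv ht)
    rw [tsum_mul_left, div_eq_mul_one_div, ← hs.tsum_eq]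
    simp only [r, add_mul, mul_assoc]
  have hsum : Summable fun i ↦ ∫ t : ℝ in Ioi 0, ‖(t : ℂ) ^ p * Complex.exp (-(r i * t))‖ := by
    simp_rw [hnorm]
    exact (summable_one_div_odd_cone_pow_of_pos (by lia) hu hv).mul_left _
  calc ∫ t : ℝ in Ioi 0, (t : ℂ) ^ p / (4 * (Complex.sinh (u * t) * Complex.sinh (v * t)))
      = ∫ t : ℝ in Ioi 0, ∑' i, (t : ℂ) ^ p * Complex.exp (-(r i * t)) :=
        setIntegral_congr_fun measurableSet_Ioi fun t ht ↦ (hkernel ht).symm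
    _ = ∑' i, ∫ t : ℝ in Ioi 0, (t : ℂ) ^ p * Complex.exp (-(r i * t)) :=
        (integral_tsum_of_summable_integral_norm
          (fun i ↦ integrableOn_pow_mul_cexp_neg_mul_Ioi p (hpos i)) hsum).symm
    _ = p ! * oddConeSum (p + 1) u v := by
        simp_rw [integral_pow_mul_cexp_neg_mul_Ioi p (hpos _), div_eq_mul_one_div (p ! : ℂ),
          tsum_mul_left]
        rfl

lemma four_mul_sinh_mul_sinh_eq_cosh_sub_cos (a b t : ℝ) :
    4 * (Complex.sinh ((b - a * I) / 2 * t) * Complex.sinh ((b + a * I) / 2 * t)) =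
      2 * (Real.cosh (b * t) - Real.cos (a * t) : ℝ) := by
  have hcos : Complex.cos (a * t) = Complex.cosh ((b + a * I) / 2 * t - (b - a * I) / 2 * t) := by
    rw [← Complex.cosh_mul_I]; ring_nf
  have hcosh : Complex.cosh (b * t) = Complex.cosh ((b + a * I) / 2 * t + (b - a * I) / 2 * t) := by
    ring_nf
  push_cast
  rw [hcos, hcosh, Complex.cosh_add, Complex.cosh_sub]
  ring

lemma integral_pow_div_cosh_sub_cos_sqrt (n : ℕ) (a : ℝ) {b : ℝ} (hb : 0 < b) :
    ((∫ x in Ioi 0, x ^ (n + 1) / (Real.cosh (b * √x) - Real.cos (a * √x)) : ℝ) : ℂ) =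
      4 * (2 * n + 3)! * oddConeSum (2 * n + 4) ((b - a * I) / 2) ((b + a * I) / 2) := by
  rw [mul_assoc, ← integral_pow_div_sinh_mul_sinh (by lia) (by simpa) (by simpa),
    ← integral_const_mul, ← integral_comp_rpow_Ioi_of_pos two_pos, ← integral_complex_ofReal]
  refine setIntegral_congr_fun measurableSet_Ioi fun t (ht : 0 < t) ↦ ?_
  simp only [four_mul_sinh_mul_sinh_eq_cosh_sub_cos, Real.rpow_two, Real.sqrt_sq ht.le, smul_eq_mul,
    show (2 : ℝ) - 1 = 1 by norm_num, Real.rpow_one]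
  generalize Real.cosh (b * t) - Real.cos (a * t) = d
  push_cast
  ring

/-! ### Evaluation of the lattice sum -/

lemma tsum_int_eq_two_mul_tsum_nat {α : Type*} [NonAssocSemiring α] [TopologicalSpace α]
    [ContinuousAdd α] [T2Space α] {f : ℤ → α} (hf : Summable fun j : ℕ ↦ f j)
    (hsymm : ∀ s, f (-1 - s) = f s) : ∑' s, f s = 2 * ∑' j : ℕ, f j := by
  have hneg (j : ℕ) : f (-(j + 1)) = f j := by rw [← hsymm, neg_add']; congr 1; ring
  rw [tsum_of_nat_of_neg_add_one hf (hf.congr fun j ↦ (hneg j).symm), tsum_congr hneg, two_mul]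

theorem oddLatticeSum_eq_two_mul_add_oddConeSum {k : ℕ} (hk : 3 ≤ k) (heven : Even k) {u v : ℂ}
    (huv : LinearIndependent ℝ ![u, v]) :
    oddLatticeSum k u v = 2 * (oddConeSum k u v + oddConeSum k u (-v)) := by
  let f (s r : ℤ) : ℂ := 1 / ((2 * s + 1) * u + (2 * r + 1) * v) ^ k
  have hf : Summable fun p : ℤ × ℤ ↦ f p.1 p.2 := summable_one_div_odd_lattice_pow hk huv
  have hsymm (s : ℤ) : ∑' r, f (-1 - s) r = ∑' r, f s r := by
    rw [← (Equiv.subLeft (-1)).tsum_eq]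
    refine tsum_congr fun r ↦ ?_
    simp only [f, Equiv.subLeft_apply]
    rw [← heven.neg_pow]
    push_cast
    ring_nf
  have hupper : Summable fun p : ℕ × ℕ ↦ f p.1 p.2 :=
    hf.comp_injective (i := fun p : ℕ × ℕ ↦ ((p.1 : ℤ), (p.2 : ℤ))) fun p q ↦ by simp [Prod.ext_iff]
  have hlower : Summable fun p : ℕ × ℕ ↦ f p.1 (-(p.2 + 1)) :=
    hf.comp_injective (i := fun p : ℕ × ℕ ↦ ((p.1 : ℤ), -((p.2 : ℤ) + 1))) fun p q ↦ by
      simp [Prod.ext_iff]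
  have hhalves (i : ℕ) : ∑' r, f i r = ∑' j : ℕ, f i j + ∑' j : ℕ, f i (-(j + 1)) :=
    tsum_of_nat_of_neg_add_one (hupper.prod_factor i) (hlower.prod_factor i)
  calc oddLatticeSum k u v = ∑' s, ∑' r, f s r := hf.tsum_prod
    _ = 2 * ∑' i : ℕ, ∑' r, f i r :=
        tsum_int_eq_two_mul_tsum_nat (hf.prod.comp_injective Nat.cast_injective) hsymm
    _ = 2 * (∑' p : ℕ × ℕ, f p.1 p.2 + ∑' p : ℕ × ℕ, f p.1 (-(p.2 + 1))) := by
        simp_rw [hhalves]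
        rw [hupper.prod.tsum_add hlower.prod, hupper.tsum_prod, hlower.tsum_prod]
    _ = 2 * (oddConeSum k u v + oddConeSum k u (-v)) := by
        congr 2
        refine tsum_congr fun p ↦ ?_
        simp only [f]
        push_cast
        ring_nf

/-- The sum of `(c τ + d)⁻ᵏ` over all integers `d = 2 s + 1 - c`, that is, over those of parity
opposite to `c`. -/
noncomputable def oddRowSum (k : ℕ) (τ : ℂ) (c : ℤ) : ℂ :=
  ∑' s : ℤ, 1 / (c * τ + (2 * s + 1 - c)) ^ k

lemma oddRowSum_neg {k : ℕ} (hk : Even k) (τ : ℂ) (c : ℤ) :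
    oddRowSum k τ (-c) = oddRowSum k τ c := by
  rw [oddRowSum, ← (Equiv.subLeft (-1)).tsum_eq]
  refine tsum_congr fun s ↦ ?_
  rw [← hk.neg_pow, Equiv.subLeft_apply]
  push_cast
  ring_nf

/-- The change of coordinates `(c, s) ↦ (s, r)` with `c = s + r + 1`. -/
def oddRowEquiv : ℤ × ℤ ≃ ℤ × ℤ where
  toFun p := (p.2, p.1 - 1 - p.2)
  invFun p := (p.1 + p.2 + 1, p.1)
  left_inv p := by ext <;> simp
  right_inv p := by ext <;> simp

theorem oddLatticeSum_eq_tsum_oddRowSum {k : ℕ} (hk : 3 ≤ k) (heven : Even k) (τ : ℍ) :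
    oddLatticeSum k ((τ + 1) / 2) ((τ - 1) / 2) =
      oddRowSum k τ 0 + 2 * ∑' c : ℕ+, oddRowSum k τ c := by
  have hindep : LinearIndependent ℝ ![((τ : ℂ) + 1) / 2, (τ - 1) / 2] := by
    refine linearIndependent_pair_of_re_mul_im_ne fun h ↦ τ.im_ne_zero ?_
    have h' : (τ.re + 1) / 2 * (τ.im / 2) = τ.im / 2 * ((τ.re - 1) / 2) := by simpa using h
    linarith
  have hterm (p : ℤ × ℤ) : 1 / ((2 * (oddRowEquiv p).1 + 1) * (((τ : ℂ) + 1) / 2) +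
      (2 * (oddRowEquiv p).2 + 1) * ((τ - 1) / 2)) ^ k =
      1 / (p.1 * τ + (2 * p.2 + 1 - p.1)) ^ k := by
    simp only [oddRowEquiv, Equiv.coe_fn_mk]
    push_cast
    ring_nf
  have hsum : Summable fun p : ℤ × ℤ ↦ 1 / ((p.1 : ℂ) * τ + (2 * p.2 + 1 - p.1)) ^ k :=
    (oddRowEquiv.summable_iff.mpr (summable_one_div_odd_lattice_pow hk hindep)).congr hterm
  rw [oddLatticeSum, ← oddRowEquiv.tsum_eq, tsum_congr hterm, hsum.tsum_prod]
  refine (tsum_int_eq_zero_add_two_mul_tsum_pnat (oddRowSum_neg heven τ) hsum.prod).trans ?_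
  rw [nsmul_eq_mul, Nat.cast_ofNat]

lemma hasSum_one_div_odd_pow {k : ℕ} (hk : k ≠ 0) :
    HasSum (fun j : ℕ ↦ 1 / (2 * (j : ℝ) + 1) ^ (2 * k))
      ((-1) ^ (k + 1) * (2 ^ (2 * k) - 1) * π ^ (2 * k) * bernoulli (2 * k) /
        (2 * (2 * k)!)) := by
  have hzeta := hasSum_zeta_nat hk
  have hodd : Summable fun j : ℕ ↦ 1 / ((2 * j + 1 : ℕ) : ℝ) ^ (2 * k) :=
    hzeta.summable.comp_injective (i := fun j : ℕ ↦ 2 * j + 1) fun i j h ↦ by simpa using h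
  have heven : HasSum (fun j : ℕ ↦ 1 / ((2 * j : ℕ) : ℝ) ^ (2 * k)) _ :=
    (hzeta.mul_left (1 / (2 : ℝ) ^ (2 * k))).congr_fun fun j ↦ by
      push_cast; rw [mul_pow, one_div_mul_one_div]
  have hsplit :=
    (heven.even_add_odd (f := fun j : ℕ ↦ 1 / (j : ℝ) ^ (2 * k)) hodd.hasSum).unique hzeta
  have hpow : (2 : ℝ) ^ (2 * k) = 2 * 2 ^ (2 * k - 1) := by
    rw [← pow_succ']; congr 1; lia
  convert! hodd.hasSum using 1
  · simp
  · rw [eq_comm, ← sub_eq_iff_eq_add'.mpr hsplit.symm, hpow]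
    field_simp

lemma oddRowSum_zero {k : ℕ} (hk : k ≠ 0) (heven : Even k) (τ : ℂ) :
    oddRowSum k τ 0 = -((π * I) ^ k * ((2 ^ k - 1) * bernoulli k) / k !) := by
  obtain ⟨j, rfl⟩ := heven.two_dvd
  have hodd := Complex.hasSum_ofReal.mpr (hasSum_one_div_odd_pow (k := j) (by lia))
  have hsymm (s : ℤ) : 1 / (2 * ((-1 - s : ℤ) : ℂ) + 1) ^ (2 * j) =
      1 / (2 * (s : ℂ) + 1) ^ (2 * j) := by
    rw [← heven.neg_pow]
    push_cast
    ring_nf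
  have hrow : oddRowSum (2 * j) τ 0 = ∑' s : ℤ, 1 / (2 * (s : ℂ) + 1) ^ (2 * j) := by
    simp [oddRowSum]
  push_cast at hodd
  rw [hrow, tsum_int_eq_two_mul_tsum_nat (by simpa using hodd.summable) hsymm]
  simp only [Int.cast_natCast]
  rw [hodd.tsum_eq, mul_pow, pow_mul I, Complex.I_sq]
  field_simp
  ring

/-- The Lipschitz formula at `z = (c τ + 1 - c) / 2`, where `exp (2 π i z) = -(-q) ^ c`. -/
lemma oddRowSum_pnat {k : ℕ} (hk : 2 ≤ k) (τ : ℍ) (c : ℕ+) :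
    oddRowSum k τ c = (-(π * I)) ^ k / (k - 1)! *
      ∑' m : ℕ+, (m : ℂ) ^ (k - 1) * (-(-Complex.exp (π * I * τ)) ^ (c : ℕ)) ^ (m : ℕ) := by
  let z : ℂ := (c * τ + 1 - c) / 2
  have hz : 0 < z.im := by
    simp [z, τ.im_pos]
  have hq : Complex.exp (2 * π * I * z) = -(-Complex.exp (π * I * τ)) ^ (c : ℕ) := by
    have hneg : -Complex.exp (π * I * τ) = Complex.exp (π * I * (τ - 1)) := by
      rw [mul_sub, Complex.exp_sub, mul_one, Complex.exp_pi_mul_I, div_neg, div_one]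
    rw [hneg, ← Complex.exp_nat_mul, ← neg_one_mul, ← Complex.exp_pi_mul_I, ← Complex.exp_add]
    congr 1
    simp only [z]
    ring
  have hterm (s : ℤ) : 1 / (((c : ℤ) : ℂ) * τ + (2 * s + 1 - (c : ℤ))) ^ k =
      1 / 2 ^ k * (1 / (z + s) ^ k) := by
    rw [one_div_mul_one_div, ← mul_pow]
    simp only [z]
    push_cast
    ring_nf
  have hlipschitz := EisensteinSeries.qExpansion_identity_pnat (k := k - 1) (by lia) ⟨z, hz⟩
  rw [Nat.sub_add_cancel (by lia)] at hlipschitz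
  simp only [hq] at hlipschitz
  rw [oddRowSum, tsum_congr hterm, tsum_mul_left, hlipschitz, ← mul_assoc]
  congr 1
  rw [show -2 * π * I = 2 * -(π * I) by ring, mul_pow]
  field_simp

lemma tsum_tsum_pow_mul_neg_pow_pow (k : ℕ) {r : ℂ} (hr : ‖r‖ < 1) :
    ∑' c : ℕ+, ∑' m : ℕ+, (m : ℂ) ^ k * (-r ^ (c : ℕ)) ^ (m : ℕ) =
      ∑' m : ℕ, (m + 1 : ℂ) ^ k * (-r) ^ (m + 1) / (1 - r ^ (m + 1)) := by
  have hsum : Summable fun p : ℕ+ × ℕ+ ↦ (p.2 : ℂ) ^ k * (-r ^ (p.1 : ℕ)) ^ (p.2 : ℕ) := by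
    refine .of_norm ((summable_prod_mul_pow k hr).norm.congr fun p ↦ ?_)
    simp [pow_mul]
  have hgeom (m : ℕ) : ∑' c : ℕ+, (m + 1 : ℂ) ^ k * (-r ^ (c : ℕ)) ^ (m + 1) =
      (m + 1 : ℂ) ^ k * (-r) ^ (m + 1) / (1 - r ^ (m + 1)) := by
    have hlt : ‖r ^ (m + 1)‖ < 1 := by
      rw [norm_pow]
      exact pow_lt_one₀ (norm_nonneg r) hr (by lia)
    rw [tsum_pnat_eq_tsum_succ (f := fun c : ℕ ↦ (m + 1 : ℂ) ^ k * (-r ^ c) ^ (m + 1)),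
      div_eq_mul_inv, ← tsum_geometric_of_norm_lt_one hlt, ← tsum_mul_left]
    refine tsum_congr fun c ↦ ?_
    rw [neg_pow, neg_pow r]
    ring
  have hcomm := Summable.tsum_comm
    (f := fun c m : ℕ+ ↦ (m : ℂ) ^ k * (-r ^ (c : ℕ)) ^ (m : ℕ)) hsum
  rw [← hcomm, ← tsum_congr hgeom]
  have h := tsum_pnat_eq_tsum_succ
    (f := fun m : ℕ ↦ ∑' c : ℕ+, (m : ℂ) ^ k * (-r ^ (c : ℕ)) ^ m)
  push_cast at h
  exact h

/-- The constant `-2 (2 ^ k - 1) B_k / k` is the value `E_{k-1}(0)` of the Euler polynomial. -/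
theorem oddLatticeSum_eq_lambert {k : ℕ} (hk : 3 ≤ k) (heven : Even k) (τ : ℍ) :
    oddLatticeSum k ((τ + 1) / 2) ((τ - 1) / 2) =
      (π * I) ^ k / (2 * (k - 1)!) * (-(2 * (2 ^ k - 1) * bernoulli k / k) +
        4 * ∑' m : ℕ, (m + 1 : ℂ) ^ (k - 1) * Complex.exp (π * I * τ) ^ (m + 1) /
          (1 - (-Complex.exp (π * I * τ)) ^ (m + 1))) := by
  have hlt : ‖-Complex.exp (π * I * τ)‖ < 1 := by
    rw [norm_neg, Complex.norm_exp, Real.exp_lt_one_iff]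
    simpa using mul_pos pi_pos τ.im_pos
  have hlambert := tsum_tsum_pow_mul_neg_pow_pow (k - 1) hlt
  rw [neg_neg] at hlambert
  rw [oddLatticeSum_eq_tsum_oddRowSum hk heven, oddRowSum_zero (by lia) heven]
  simp_rw [oddRowSum_pnat (by lia : 2 ≤ k) τ]
  rw [tsum_mul_left, hlambert, heven.neg_pow, ← Nat.mul_factorial_pred (by lia : k ≠ 0)]
  have hk0 : (k : ℂ) ≠ 0 := by norm_cast; lia
  push_cast
  field_simp
  ring

/-! ### The moment integrals -/

theorem integral_add_integral_eq_oddLatticeSum {a b : ℝ} (ha : 0 < a) (hb : 0 < b) (n : ℕ) :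
    (((∫ x in Ioi 0, x ^ (n + 1) / (Real.cosh (b * √x) - Real.cos (a * √x))) +
      (-1) ^ n * ∫ x in Ioi 0, x ^ (n + 1) / (Real.cosh (a * √x) - Real.cos (b * √x)) : ℝ) : ℂ) =
      2 * (2 * n + 3)! * oddLatticeSum (2 * n + 4) ((b - a * I) / 2) ((b + a * I) / 2) := by
  have hindep : LinearIndependent ℝ ![(b - a * I) / 2, (b + a * I) / 2] := by
    refine linearIndependent_pair_of_re_mul_im_ne fun h ↦ (mul_pos ha hb).ne' ?_
    have h' : b / 2 * (a / 2) = -a / 2 * (b / 2) := by simpa using h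
    linarith
  have hI : I ^ (2 * n + 4) = (-1) ^ n := by
    rw [pow_add, pow_mul, Complex.I_sq, Complex.I_pow_four, mul_one]
  have hrotate : oddConeSum (2 * n + 4) ((a - b * I) / 2) ((a + b * I) / 2) =
      (-1) ^ n * oddConeSum (2 * n + 4) ((b - a * I) / 2) (-((b + a * I) / 2)) := by
    have hu : (a + b * I) / 2 = I * ((b - a * I) / 2) := by linear_combination a / 2 * Complex.I_sq
    have hv : (a - b * I) / 2 = I * -((b + a * I) / 2) := by
      linear_combination a / 2 * Complex.I_sq
    rw [hu, hv, oddConeSum_comm, oddConeSum_mul_mul, hI, div_eq_mul_inv, mul_comm, ← inv_pow,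
      inv_neg_one]
  rw [oddLatticeSum_eq_two_mul_add_oddConeSum (by lia) ⟨n + 2, by ring⟩ hindep]
  push_cast
  rw [integral_pow_div_cosh_sub_cos_sqrt n a hb, integral_pow_div_cosh_sub_cos_sqrt n b ha, hrotate]
  have hsq : ((-1 : ℂ) ^ n) * (-1) ^ n = 1 := by rw [← mul_pow]; norm_num
  linear_combination 4 * (2 * n + 3)! *
    oddConeSum (2 * n + 4) ((b - a * I) / 2) (-((b + a * I) / 2)) * hsq

theorem oddLatticeSum_eq_lambert_of_pos {k : ℕ} (hk : 3 ≤ k) (heven : Even k) {a b : ℝ}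
    (ha : 0 < a) (hb : 0 < b) :
    oddLatticeSum k ((b - a * I) / 2) ((b + a * I) / 2) =
      (π / a) ^ k / (2 * (k - 1)!) * (-(2 * (2 ^ k - 1) * bernoulli k / k) +
        4 * ∑' m : ℕ, (m + 1 : ℂ) ^ (k - 1) * Real.exp (-(π * b / a)) ^ (m + 1) /
          (1 - (-(Real.exp (-(π * b / a)) : ℂ)) ^ (m + 1))) := by
  have ha0 : (a : ℂ) ≠ 0 := mod_cast ha.ne'
  let τ : ℍ := ⟨b / a * I, by simpa [← Complex.ofReal_div] using div_pos hb ha⟩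
  have hτ : (τ : ℂ) = b / a * I := rfl
  have hu : (b - a * I) / 2 = -(a * I) * ((τ + 1) / 2) := by
    rw [hτ]; field_simp; linear_combination b * Complex.I_sq
  have hv : (b + a * I) / 2 = -(a * I) * ((τ - 1) / 2) := by
    rw [hτ]; field_simp; linear_combination b * Complex.I_sq
  have hq : Complex.exp (π * I * τ) = Real.exp (-(π * b / a)) := by
    rw [hτ, Complex.ofReal_exp]
    push_cast
    congr 1
    linear_combination π * b / a * Complex.I_sq
  have hscale : (π * I) ^ k / (-(a * I)) ^ k = (π / a : ℂ) ^ k := by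
    rw [heven.neg_pow, ← div_pow, mul_div_mul_right _ _ Complex.I_ne_zero]
  rw [hu, hv, oddLatticeSum_mul_mul, oddLatticeSum_eq_lambert hk heven, hq, ← hscale]
  ring

lemma ellipticK_pos {k : ℝ} (hk : k ^ 2 < 1) : 0 < ellipticK k := by
  have hpos (θ : ℝ) : 0 < 1 - k ^ 2 * Real.sin θ ^ 2 := by
    nlinarith [Real.sin_sq_le_one θ, sq_nonneg k]
  have hcont : Continuous fun θ : ℝ ↦ (1 - k ^ 2 * Real.sin θ ^ 2) ^ (-(1 / 2) : ℝ) :=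
    .rpow_const (by fun_prop) fun θ ↦ .inl (hpos θ).ne'
  exact intervalIntegral.intervalIntegral_pos_of_pos (hcont.intervalIntegrable _ _)
    (fun θ ↦ Real.rpow_pos_of_pos (hpos θ) _) (by positivity)

lemma ellipticK_sqrt_one_sub_sq_pos {k : ℝ} (hk : k ≠ 0) : 0 < ellipticK √(1 - k ^ 2) := by
  refine ellipticK_pos ?_
  rw [Real.sq_sqrt']
  exact max_lt (sub_lt_self 1 (by positivity)) one_pos

theorem Iminus_lambert_series_general {a b : ℝ} (ha : 0 < a) (hb : 0 < b) (n : ℕ) :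
    (∫ x in Ioi (0 : ℝ), x ^ (n + 1) / (Real.cos (a * √x) - Real.cosh (b * √x))) +
      (-1) ^ (n + 1) *
        (∫ x in Ioi (0 : ℝ), x ^ (n + 1) / (Real.cosh (a * √x) - Real.cos (b * √x))) =
      -(π / a) ^ (2 * n + 4) *
        (((-((2 ^ (2 * n + 4) - 1) * bernoulli (2 * n + 4)) / (n + 2) : ℚ) : ℝ) +
          4 * ∑' m : ℕ, ((m : ℝ) + 1) ^ (2 * n + 3) * Real.exp (-(π * b / a)) ^ (m + 1) /
            (1 - (-Real.exp (-(π * b / a))) ^ (m + 1))) := by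
  have hneg : (∫ x in Ioi 0, x ^ (n + 1) / (Real.cos (a * √x) - Real.cosh (b * √x))) =
      -∫ x in Ioi 0, x ^ (n + 1) / (Real.cosh (b * √x) - Real.cos (a * √x)) := by
    simp_rw [← integral_neg, ← div_neg, neg_sub]
  have hfac : ((2 * n + 3)! : ℂ) ≠ 0 := mod_cast Nat.factorial_ne_zero _
  have hn : (n + 2 : ℂ) ≠ 0 := mod_cast (n + 1).succ_ne_zero
  apply Complex.ofReal_injective
  calc _ = -(2 * (2 * n + 3)! * oddLatticeSum (2 * n + 4) ((b - a * I) / 2) ((b + a * I) / 2)) := by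
        rw [← integral_add_integral_eq_oddLatticeSum ha hb, hneg]
        push_cast
        ring
    _ = _ := by
        rw [oddLatticeSum_eq_lambert_of_pos (by lia) ⟨n + 2, by ring⟩ ha hb]
        push_cast
        rw [show (2 * n + 4 : ℂ) = 2 * (n + 2) by ring]
        field_simp

end

theorem Iminus_lambert_series (k : ℝ) (hk : k ∈ Set.Ioo (0 : ℝ) 1) (n : ℕ) :
    Iminus k n =
      -(π / ellipticK k) ^ (2 * n + 4) *
        (((-((2 ^ (2 * n + 4) - 1) * bernoulli (2 * n + 4)) / (n + 2) : ℚ) : ℝ) +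
          4 * ∑' m : ℕ, ((m : ℝ) + 1) ^ (2 * n + 3) *
            Real.exp (-(π * ellipticK (Real.sqrt (1 - k ^ 2)) / ellipticK k)) ^ (m + 1) /
              (1 - (-Real.exp (-(π * ellipticK (Real.sqrt (1 - k ^ 2)) / ellipticK k))) ^ (m + 1))) :=
  Iminus_lambert_series_general (ellipticK_pos ((sq_lt_one_iff₀ hk.1.le).mpr hk.2))
    (ellipticK_sqrt_one_sub_sq_pos hk.1.ne') n
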